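/- Let j = min{i ∈ [t] : m_i = m_t} and let d = n_1 + ... + n_{j−1} + δ + 1 for some 0 ≤ δ ≤ n_j − 1. Let h = max{i ∈ [t] : n_i > m_t}; assume that such an h exists (i.e., h ∈ [t]) and that m_h ≥ m_t · (n_j + n_{j+1} + ... + n_t − δ). If q > t − h, then there exist MSRD codes 𝒞_n ⊆ 𝒞_{n−1} ⊆ ... ⊆ 𝒞_{d+1} ⊆ 𝒞_d ⊆ 𝕄 with d(𝒞_i) = i for all d ≤ i ≤ n, where n = n_1 + ... + n_t. -/

import Mathlib

open Module

variable {F : Type*} [Field F] [Fintype F] {t : ℕ} {m n : Fin t → ℕ}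

/-- The sum-rank weight of an element of `𝕄 = F^{m 0 × n 0} × ⋯ × F^{m (t-1) × n (t-1)}`. -/
noncomputable def srk (C : ∀ i : Fin t, Matrix (Fin (m i)) (Fin (n i)) F) : ℕ :=
  ∑ i, (C i).rank

/-- The maximum sum-rank of a code. -/
noncomputable def maxsrk (𝒞 : Submodule F (∀ i : Fin t, Matrix (Fin (m i)) (Fin (n i)) F)) : ℕ :=
  sSup {w | ∃ C ∈ 𝒞, srk C = w}

/-- The minimum distance of a code. -/
noncomputable def minDist (𝒞 : Submodule F (∀ i : Fin t, Matrix (Fin (m i)) (Fin (n i)) F)) : ℕ :=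
  sInf {w | ∃ C ∈ 𝒞, C ≠ 0 ∧ srk C = w}

/-- The maximum rank of a subspace of a matrix space. -/
noncomputable def maxrank {a b : ℕ} (𝒜 : Submodule F (Matrix (Fin a) (Fin b) F)) : ℕ :=
  sSup {w | ∃ A ∈ 𝒜, A.rank = w}

/-- Optimal anticodes in a single matrix space. -/
def IsOptAnticode {a b : ℕ} (𝒜 : Submodule F (Matrix (Fin a) (Fin b) F)) : Prop :=
  Module.finrank F 𝒜 = a * maxrank 𝒜

/-- The weight of a sum-rank metric code: the minimum of `maxsrk` over products of
optimal anticodes containing it. -/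
noncomputable def codeWt (𝒞 : Submodule F (∀ i : Fin t, Matrix (Fin (m i)) (Fin (n i)) F)) : ℕ :=
  sInf {w | ∃ 𝒜 : ∀ i : Fin t, Submodule F (Matrix (Fin (m i)) (Fin (n i)) F),
    (∀ i, IsOptAnticode (𝒜 i)) ∧ 𝒞 ≤ Submodule.pi Set.univ 𝒜 ∧
      maxsrk (Submodule.pi Set.univ 𝒜) = w}

/-- The `r`-th generalized sum-rank weight of a code. -/
noncomputable def gw (𝒞 : Submodule F (∀ i : Fin t, Matrix (Fin (m i)) (Fin (n i)) F))
    (r : ℕ) : ℕ :=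
  sInf {w | ∃ 𝒟 : Submodule F (∀ i : Fin t, Matrix (Fin (m i)) (Fin (n i)) F),
    𝒟 ≤ 𝒞 ∧ r ≤ Module.finrank F 𝒟 ∧ codeWt 𝒟 = w}

/-- Maximum sum-rank distance (MSRD) codes. -/
def IsMSRD (𝒞 : Submodule F (∀ i : Fin t, Matrix (Fin (m i)) (Fin (n i)) F)) : Prop :=
  ∃ j : Fin t, ∃ δ : ℕ, δ + 1 ≤ n j ∧
    minDist 𝒞 = ∑ i ∈ Finset.Iio j, n i + δ + 1 ∧
    Module.finrank F 𝒞 + δ * m j = ∑ i ∈ Finset.Ici j, m i * n i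

/-!
Let `q = |F|`, let `L` be the extension of `F` of degree `m t`, and let `k` be at most
`N = n_j + ⋯ + n_t - δ`. A skew polynomial `f` over `L` of degree less than `k` is encoded
blockwise. On the at most `q - 1` blocks `i > h`, where `n i ≤ m t`, the codeword is the evaluation
of `f` at `x ↦ a i * x ^ q`, the `a i` having distinct norms, as in a linearized Reed-Solomon code;
there the total rank defect is at most `deg f`. On the other blocks `m i` is at least the dimension
`m t * N` of the message space, so messages can be embedded in the extension of `F` of degree `m i`,
and multiplication by a nonzero element of that field gives full rank. The resulting codes are
nested in `k` and have minimum distance at least `n - k + 1`; equality is the Singleton bound.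
-/

open Finset Polynomial

section LinearAlgebra

variable {K : Type*} [Field K]

theorem finrank_ker_comp_le {V W U : Type*} [AddCommGroup V] [Module K V] [AddCommGroup W]
    [Module K W] [AddCommGroup U] [Module K U] [FiniteDimensional K V] [FiniteDimensional K W]
    (g : W →ₗ[K] U) (f : V →ₗ[K] W) :
    finrank K (LinearMap.ker (g ∘ₗ f)) ≤
      finrank K (LinearMap.ker g) + finrank K (LinearMap.ker f) := by
  set P := LinearMap.ker (g ∘ₗ f)
  have hrange : LinearMap.range (f.domRestrict P) ≤ LinearMap.ker g := by
    rintro _ ⟨x, rfl⟩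
    exact x.2
  have hker : (LinearMap.ker (f.domRestrict P)).map P.subtype ≤ LinearMap.ker f := by
    rintro _ ⟨x, hx, rfl⟩
    exact hx
  have hker_le := Submodule.finrank_mono hker
  rw [Submodule.finrank_map_subtype_eq] at hker_le
  have := Submodule.finrank_mono hrange
  have := (f.domRestrict P).finrank_range_add_finrank_ker
  lia

theorem finrank_map_eq_of_disjoint_ker {R V W : Type*} [Ring R] [AddCommGroup V] [Module R V]
    [AddCommGroup W] [Module R W] {f : V →ₗ[R] W} {p : Submodule R V}
    (hp : Disjoint p (LinearMap.ker f)) : finrank R (p.map f) = finrank R p := by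
  rw [← LinearMap.range_domRestrict]
  exact LinearMap.finrank_range_of_inj (LinearMap.injective_domRestrict_iff.2 hp)

theorem exists_linearMap_matrix_le_rank_add_finrank_ker {V : Type*} [AddCommGroup V] [Module K V]
    [FiniteDimensional K V] {a b : ℕ} (hb : b ≤ finrank K V) (ha : finrank K V ≤ a) :
    ∃ φ : Module.End K V →ₗ[K] Matrix (Fin a) (Fin b) K,
      ∀ T, b ≤ (φ T).rank + finrank K (LinearMap.ker T) := by
  obtain ⟨E, hE⟩ := (finrank_le_iff_exists_linearMap (R := K) (M := V) (M' := Fin a → K)).1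
    (by simpa using ha)
  obtain ⟨A, hA⟩ := (finrank_le_iff_exists_linearMap (R := K) (M := Fin b → K) (M' := V)).1
    (by simpa using hb)
  refine ⟨LinearMap.toMatrix'.toLinearMap ∘ₗ LinearMap.lcomp K _ A ∘ₗ LinearMap.compRight K E,
    fun T => ?_⟩
  have hrank : (LinearMap.toMatrix' (E ∘ₗ T ∘ₗ A)).rank =
      finrank K (LinearMap.range (E ∘ₗ T ∘ₗ A)) := by
    rw [Matrix.rank, ← Matrix.toLin'_apply', Matrix.toLin'_toMatrix']
  have hnullity := (E ∘ₗ T ∘ₗ A).finrank_range_add_finrank_ker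
  have hker : finrank K (LinearMap.ker (E ∘ₗ T ∘ₗ A)) ≤ finrank K (LinearMap.ker T) := by
    rw [LinearMap.ker_comp_of_ker_eq_bot _ (LinearMap.ker_eq_bot.2 hE)]
    have hle := finrank_ker_comp_le T A
    rwa [LinearMap.ker_eq_bot.2 hA, finrank_bot, add_zero] at hle
  rw [finrank_fin_fun] at hnullity
  change b ≤ (LinearMap.toMatrix' (E ∘ₗ T ∘ₗ A)).rank + _
  lia

theorem rank_add_card_le_of_col_eq_zero {α β : Type*} [Fintype β] (B : Matrix α β K)
    (S : Finset β) (hS : ∀ c ∈ S, B.col c = 0) : B.rank + #S ≤ Fintype.card β := by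
  classical
  have hspan : Submodule.span K (Set.range B.col) ≤ Submodule.span K (Sᶜ.image B.col : Set _) := by
    rw [Submodule.span_le]
    rintro _ ⟨c, rfl⟩
    by_cases hc : c ∈ S
    · simp [hS c hc]
    · exact Submodule.subset_span (by simpa using ⟨c, hc, rfl⟩)
  have hrank : B.rank ≤ #Sᶜ := by
    rw [Matrix.rank_eq_finrank_span_cols]
    exact (Submodule.finrank_mono hspan).trans
      ((finrank_span_finset_le_card _).trans card_image_le)
  rw [← card_compl_add_card S]
  lia

theorem finrank_restrictScalars_degreeLT (L : Type*) [Field L] [Algebra K L] (k : ℕ) :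
    finrank K ((degreeLT L k).restrictScalars K) = finrank K L * k := by
  have : finrank L (degreeLT L k) = k := by
    rw [(degreeLTEquiv L k).finrank_eq, finrank_fin_fun]
  calc finrank K (degreeLT L k) = finrank K L * finrank L (degreeLT L k) :=
        (finrank_mul_finrank K L (degreeLT L k)).symm
    _ = finrank K L * k := by rw [this]

end LinearAlgebra

section SkewPolynomials

variable {K L V : Type*} [Field K] [Field L] [AddCommGroup V] [Module K V] [Module L V]

/-- Evaluation `∑ c_s X ^ s ↦ ∑ c_s T ^ s` of a skew polynomial at an operator. A skew polynomial
is encoded by its left coefficients, as an element of `L[X]`; the commutative multiplication of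
`L[X]` plays no role. -/
noncomputable def skewEval [SMulCommClass K L V] (T : Module.End K V) : L[X] →ₗ[L] Module.End K V :=
  lsum fun s => LinearMap.toSpanSingleton L (Module.End K V) (T ^ s)

theorem skewEval_monomial [SMulCommClass K L V] (T : Module.End K V) (s : ℕ) (b : L) :
    skewEval T (monomial s b) = b • T ^ s := by
  simp [skewEval, sum_monomial_index]

theorem skewEval_C [SMulCommClass K L V] (T : Module.End K V) (b : L) :
    skewEval T (C b) = b • 1 := by
  rw [← monomial_zero_left, skewEval_monomial, pow_zero]

variable [Algebra K L]

/-- Right multiplication `g ↦ g * (X - c)` in the skew polynomial ring over `L` in which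
`X * b = σ b * X`, acting on left coefficients. -/
noncomputable def skewMulXSubC (σ : L ≃ₐ[K] L) (c : L) : L[X] →ₗ[L] L[X] :=
  lsum fun s => monomial (s + 1) - monomial s ∘ₗ LinearMap.mulRight L ((σ ^ s) c)

theorem skewMulXSubC_monomial (σ : L ≃ₐ[K] L) (c : L) (s : ℕ) (b : L) :
    skewMulXSubC σ c (monomial s b) = monomial (s + 1) b - monomial s (b * (σ ^ s) c) := by
  simp [skewMulXSubC, sum_monomial_index]

theorem pow_apply_smul_of_semilinear {σ : L ≃ₐ[K] L} {T : Module.End K V}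
    (hT : ∀ (c : L) (v : V), T (c • v) = σ c • T v) (s : ℕ) (c : L) (v : V) :
    (T ^ s) (c • v) = (σ ^ s) c • (T ^ s) v := by
  induction s with
  | zero => simp
  | succ s ih => simp only [pow_succ', Module.End.mul_apply, AlgEquiv.mul_apply, ih, hT]

theorem skewEval_skewMulXSubC [SMulCommClass K L V] {σ : L ≃ₐ[K] L} {T : Module.End K V}
    (hT : ∀ (c : L) (v : V), T (c • v) = σ c • T v) (c : L) (g : L[X]) :
    skewEval T (skewMulXSubC σ c g) = skewEval T g * (T - c • 1) := by
  induction g using Polynomial.induction_on' with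
  | add p q hp hq => rw [map_add, map_add, map_add, hp, hq, add_mul]
  | monomial s b =>
    ext v
    simp only [skewMulXSubC_monomial, map_sub, skewEval_monomial, LinearMap.sub_apply,
      LinearMap.smul_apply, Module.End.mul_apply, Module.End.one_apply, pow_succ,
      pow_apply_smul_of_semilinear hT, mul_smul]

theorem coeff_succ_skewMulXSubC (σ : L ≃ₐ[K] L) (c : L) (g : L[X]) (s : ℕ) :
    (skewMulXSubC σ c g).coeff (s + 1) = g.coeff s - g.coeff (s + 1) * (σ ^ (s + 1)) c := by
  induction g using Polynomial.induction_on' with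
  | add p q hp hq => rw [map_add, coeff_add, hp, hq, coeff_add, coeff_add]; ring
  | monomial r b =>
    rw [skewMulXSubC_monomial, coeff_sub, coeff_monomial, coeff_monomial, coeff_monomial,
      coeff_monomial]
    split_ifs <;> grind

theorem exists_eq_skewMulXSubC_add_C (σ : L ≃ₐ[K] L) (c : L) (f : L[X]) :
    ∃ (g : L[X]) (ρ : L), f = skewMulXSubC σ c g + C ρ := by
  induction f using Polynomial.induction_on' with
  | add p q hp hq =>
    obtain ⟨g, ρ, rfl⟩ := hp
    obtain ⟨g', ρ', rfl⟩ := hq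
    exact ⟨g + g', ρ + ρ', by rw [map_add, C_add]; ring⟩
  | monomial s b =>
    induction s generalizing b with
    | zero => exact ⟨0, b, by simp⟩
    | succ s ih =>
      obtain ⟨g, ρ, hg⟩ := ih (b * (σ ^ s) c)
      refine ⟨monomial s b + g, ρ, ?_⟩
      rw [map_add, add_assoc, ← hg, skewMulXSubC_monomial, sub_add_cancel]

theorem natDegree_lt_natDegree_skewMulXSubC (σ : L ≃ₐ[K] L) (c : L) {g : L[X]} (hg : g ≠ 0) :
    g.natDegree < (skewMulXSubC σ c g).natDegree := by
  refine Nat.lt_of_succ_le (le_natDegree_of_ne_zero ?_)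
  rw [Nat.succ_eq_add_one, coeff_succ_skewMulXSubC,
    coeff_eq_zero_of_natDegree_lt (Nat.lt_succ_self _), zero_mul, sub_zero]
  exact leadingCoeff_ne_zero.2 hg

end SkewPolynomials

section TwistedOperators

variable {K L : Type*} [Field K] [Field L] [Algebra K L]

/-- The `σ`-semilinear operator `x ↦ a * σ x`; these are the evaluation points of linearized
Reed-Solomon codes. -/
def twist (σ : L ≃ₐ[K] L) (a : L) : Module.End K L := a • σ.toLinearMap

theorem twist_apply (σ : L ≃ₐ[K] L) (a x : L) : twist σ a x = a * σ x := rfl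

theorem twist_smul (σ : L ≃ₐ[K] L) (a c x : L) : twist σ a (c • x) = σ c • twist σ a x := by
  simp only [twist_apply, smul_eq_mul, map_mul, mul_left_comm]

theorem mem_ker_twist_sub_smul_one {σ : L ≃ₐ[K] L} {a c x : L} :
    x ∈ LinearMap.ker (twist σ a - c • 1) ↔ a * σ x = c * x := by
  simp [twist_apply, sub_eq_zero]

/-- Two nonzero solutions of `a * σ x = c * x` have a `σ`-invariant quotient. -/
theorem finrank_ker_twist_sub_smul_one_le_one {σ : L ≃ₐ[K] L}
    (hσ : ∀ x, σ x = x → x ∈ Set.range (algebraMap K L)) {a : L} (ha : a ≠ 0) (c : L) :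
    finrank K (LinearMap.ker (twist σ a - c • 1)) ≤ 1 := by
  by_cases hbot : LinearMap.ker (twist σ a - c • 1) = ⊥
  · rw [hbot, finrank_bot]
    exact zero_le_one
  obtain ⟨β, hβ, hβ0⟩ := Submodule.exists_mem_ne_zero_of_ne_bot hbot
  refine finrank_le_one (⟨β, hβ⟩ : LinearMap.ker (twist σ a - c • 1)) ?_
  rintro ⟨γ, hγ⟩
  rw [mem_ker_twist_sub_smul_one] at hβ hγ
  have hσβ : σ β ≠ 0 := by simpa using hβ0
  have hfix : σ (γ / β) = γ / β := by
    rw [map_div₀, div_eq_div_iff hσβ hβ0]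
    apply mul_left_cancel₀ ha
    linear_combination β * hγ - γ * hβ
  obtain ⟨u, hu⟩ := hσ _ hfix
  refine ⟨u, Subtype.ext ?_⟩
  rw [SetLike.val_smul, Algebra.smul_def, hu, div_mul_cancel₀ _ hβ0]

theorem norm_eq_norm_of_mul_algEquiv_eq {σ : L ≃ₐ[K] L} [FiniteDimensional K L] {a c x : L}
    (hx : x ≠ 0) (h : a * σ x = c * x) : Algebra.norm K a = Algebra.norm K c := by
  have hnorm := congrArg (Algebra.norm K) h
  rw [map_mul, map_mul, Algebra.norm_eq_of_algEquiv] at hnorm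
  exact mul_right_cancel₀ (Algebra.norm_ne_zero_iff.2 hx) hnorm

variable [FiniteDimensional K L] {σ : L ≃ₐ[K] L} {ι : Type*} {S : Finset ι} {a : ι → L}

theorem sum_finrank_ker_twist_sub_smul_one_le_one
    (hσ : ∀ x, σ x = x → x ∈ Set.range (algebraMap K L)) (ha : ∀ i ∈ S, a i ≠ 0)
    (hnorm : Set.InjOn (fun i => Algebra.norm K (a i)) S) (c : L) :
    ∑ i ∈ S, finrank K (LinearMap.ker (twist σ (a i) - c • 1)) ≤ 1 := by
  by_cases hbot : ∀ i ∈ S, LinearMap.ker (twist σ (a i) - c • 1) = ⊥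
  · rw [sum_eq_zero fun i hi => by rw [hbot i hi, finrank_bot]]
    exact zero_le_one
  push Not at hbot
  obtain ⟨i₀, hi₀, hne⟩ := hbot
  have hnorm_c : ∀ i, LinearMap.ker (twist σ (a i) - c • 1) ≠ ⊥ →
      Algebra.norm K (a i) = Algebra.norm K c := fun i hi => by
    obtain ⟨x, hx, hx0⟩ := Submodule.exists_mem_ne_zero_of_ne_bot hi
    exact norm_eq_norm_of_mul_algEquiv_eq hx0 (mem_ker_twist_sub_smul_one.1 hx)
  rw [sum_eq_single_of_mem i₀ hi₀]
  · exact finrank_ker_twist_sub_smul_one_le_one hσ (ha i₀ hi₀) c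
  · intro i hi hii₀
    by_contra hfin
    have hi_ne : LinearMap.ker (twist σ (a i) - c • 1) ≠ ⊥ := fun h => hfin (by rw [h, finrank_bot])
    exact hii₀ (hnorm hi hi₀ ((hnorm_c i hi_ne).trans (hnorm_c i₀ hne).symm))

/-- A nonzero `β` killed by `f` at the point `a i₀` is an eigenvector of `twist σ (a i₀)`, say with
eigenvalue `c`, so `X - c` is a right factor of `f`. Removing it lowers the degree by one, and the
sum of the kernel dimensions by at most one. -/
theorem sum_finrank_ker_skewEval_twist_le_natDegree
    (hσ : ∀ x, σ x = x → x ∈ Set.range (algebraMap K L)) (ha : ∀ i ∈ S, a i ≠ 0)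
    (hnorm : Set.InjOn (fun i => Algebra.norm K (a i)) S) {f : L[X]} (hf : f ≠ 0) :
    ∑ i ∈ S, finrank K (LinearMap.ker (skewEval (twist σ (a i)) f)) ≤ f.natDegree := by
  induction hd : f.natDegree using Nat.strong_induction_on generalizing f with
  | _ d ih =>
  by_cases hbot : ∀ i ∈ S, LinearMap.ker (skewEval (twist σ (a i)) f) = ⊥
  · rw [sum_eq_zero fun i hi => by rw [hbot i hi, finrank_bot]]
    exact Nat.zero_le _
  push Not at hbot
  obtain ⟨i₀, -, hne⟩ := hbot
  obtain ⟨β, hβ, hβ0⟩ := Submodule.exists_mem_ne_zero_of_ne_bot hne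
  set c := a i₀ * σ β / β
  have hcβ : (twist σ (a i₀) - c • 1) β = 0 :=
    mem_ker_twist_sub_smul_one.2 (div_mul_cancel₀ _ hβ0).symm
  obtain ⟨g, ρ, rfl⟩ := exists_eq_skewMulXSubC_add_C σ c f
  obtain rfl : ρ = 0 := by
    rw [LinearMap.mem_ker, map_add, skewEval_skewMulXSubC (twist_smul σ _), skewEval_C,
      LinearMap.add_apply, Module.End.mul_apply, hcβ, map_zero, zero_add] at hβ
    simpa [hβ0] using hβ
  rw [C_0, add_zero] at hf hd ⊢
  have hg : g ≠ 0 := fun hg => hf (by rw [hg, map_zero])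
  have hdeg : g.natDegree < d := hd ▸ natDegree_lt_natDegree_skewMulXSubC σ c hg
  calc ∑ i ∈ S, finrank K (LinearMap.ker (skewEval (twist σ (a i)) (skewMulXSubC σ c g)))
      ≤ ∑ i ∈ S, (finrank K (LinearMap.ker (skewEval (twist σ (a i)) g)) +
          finrank K (LinearMap.ker (twist σ (a i) - c • 1))) := by
        refine sum_le_sum fun i _ => ?_
        rw [skewEval_skewMulXSubC (twist_smul σ _)]
        exact finrank_ker_comp_le _ _
    _ ≤ g.natDegree + 1 := by
        rw [sum_add_distrib]
        exact Nat.add_le_add (ih _ hdeg hg rfl)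
          (sum_finrank_ker_twist_sub_smul_one_le_one hσ ha hnorm c)
    _ ≤ d := hdeg

end TwistedOperators

section FiniteFields

theorem exists_field_finrank_eq (K : Type*) [Field K] [Finite K] {M : ℕ} (hM : 0 < M) :
    ∃ (L : Type) (_ : Field L) (_ : Algebra K L) (_ : FiniteDimensional K L),
      finrank K L = M := by
  obtain ⟨p, hp⟩ := CharP.exists K
  have : Fact p.Prime := ⟨(CharP.char_is_prime_or_zero K p).resolve_right
    (CharP.char_ne_zero_of_finite K p)⟩
  have : NeZero M := ⟨hM.ne'⟩
  exact ⟨FiniteField.Extension K p M, inferInstance, inferInstance, inferInstance,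
    FiniteField.finrank_extension K p M⟩

variable {K : Type*} [Field K]

theorem mem_range_algebraMap_of_frobenius_eq [Fintype K] {L : Type*} [Field L] [Algebra K L]
    [Finite L] {x : L} (hx : FiniteField.frobeniusAlgEquivOfAlgebraic K L x = x) :
    x ∈ Set.range (algebraMap K L) := by
  rw [IsGalois.mem_range_algebraMap_iff_fixed]
  intro g
  obtain ⟨r, rfl⟩ := (FiniteField.bijective_frobeniusAlgEquivOfAlgebraic_pow K L).2 g
  rw [AlgEquiv.coe_pow]
  exact Function.iterate_fixed hx _

theorem exists_ne_zero_and_injOn_norm [Fintype K] (L : Type*) [Field L] [Algebra K L] [Finite L]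
    {ι : Type*} {S : Finset ι} (hS : #S < Fintype.card K) :
    ∃ a : ι → L, (∀ i, a i ≠ 0) ∧ Set.InjOn (fun i => Algebra.norm K (a i)) S := by
  classical
  obtain ⟨u, -, hu⟩ : ∃ u : ι → Kˣ, (S : Set ι) ⊆ u ⁻¹' Set.univ ∧ Set.InjOn u S := by
    refine S.finite_toSet.exists_injOn_of_encard_le ?_
    rw [Set.encard_coe_eq_coe_finsetCard, Set.encard_univ, ENat.card_eq_coe_fintype_card,
      Fintype.card_units]
    exact_mod_cast Nat.le_sub_one_of_lt hS
  choose a ha using fun i => FiniteField.norm_surjective K L (u i : K)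
  refine ⟨a, fun i hi => (u i).ne_zero ?_, fun i hi i' hi' h => hu hi hi' (Units.ext ?_)⟩
  · rw [← ha, hi, Algebra.norm_zero]
  · simpa only [ha] using h

/-- Embed `W` into a field extension of `K` of degree `a` and let it act by multiplication. -/
theorem exists_linearMap_matrix_le_rank [Finite K] {V : Type*} [AddCommGroup V] [Module K V]
    {a b : ℕ} (ha : 0 < a) (hba : b ≤ a) (W : Submodule K V) [FiniteDimensional K W]
    (hW : finrank K W ≤ a) :
    ∃ φ : V →ₗ[K] Matrix (Fin a) (Fin b) K, ∀ v ∈ W, v ≠ 0 → b ≤ (φ v).rank := by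
  obtain ⟨L, _, _, _, hL⟩ := exists_field_finrank_eq K ha
  obtain ⟨ι, hι⟩ := (finrank_le_iff_exists_linearMap (R := K) (M := W) (M' := L)).1 (by lia)
  obtain ⟨ι', hι'⟩ := ι.exists_extend
  obtain ⟨φ, hφ⟩ := exists_linearMap_matrix_le_rank_add_finrank_ker (K := K) (V := L)
    (hba.trans hL.ge) hL.le
  refine ⟨φ ∘ₗ LinearMap.mul K L ∘ₗ ι', fun v hv hv0 => ?_⟩
  have hιv : ι' v ≠ 0 := fun h => hv0 <| congrArg Subtype.val <|
    hι (a₁ := ⟨v, hv⟩) (a₂ := 0) (by rw [map_zero, ← h, ← hι']; rfl)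
  have hker : LinearMap.ker (LinearMap.mul K L (ι' v)) = ⊥ :=
    LinearMap.ker_eq_bot.2 (mul_right_injective₀ hιv)
  have hle := hφ (LinearMap.mul K L (ι' v))
  rwa [hker, finrank_bot, add_zero] at hle

end FiniteFields

section SumRankMetric

theorem sum_Iio_add_sum_Ici {ι M : Type*} [Fintype ι] [LinearOrder ι] [LocallyFiniteOrderBot ι]
    [LocallyFiniteOrderTop ι] [AddCommMonoid M] (w : ι → M) (j : ι) :
    ∑ i ∈ Iio j, w i + ∑ i ∈ Ici j, w i = ∑ i, w i := by
  rw [← sum_filter_add_sum_filter_not univ (· < j)]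
  congr 2 <;> ext <;> simp

theorem exists_eq_sum_Iio_add {d : ℕ} (hd : d < ∑ i, n i) :
    ∃ (j : Fin t) (δ : ℕ), δ + 1 ≤ n j ∧ d = ∑ i ∈ Iio j, n i + δ := by
  obtain ⟨⟨j, δ⟩, hjδ⟩ := finSigmaFinEquiv.surjective (⟨d, hd⟩ : Fin (∑ i, n i))
  have hIio : univ.map (Fin.castLEEmb j.2.le) = Iio j := by
    ext i
    simp only [mem_map, mem_univ, true_and, mem_Iio]
    exact ⟨fun ⟨l, hl⟩ => hl ▸ l.2, fun hi => ⟨⟨i, hi⟩, rfl⟩⟩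
  refine ⟨j, δ, δ.2, ?_⟩
  rw [← hIio, sum_map]
  exact (congrArg Fin.val hjδ).symm.trans (finSigmaFinEquiv_apply _)

section Singleton

variable {K : Type*} [Field K] {𝒞 : Submodule K (∀ i, Matrix (Fin (m i)) (Fin (n i)) K)}

theorem srk_zero : srk (0 : ∀ i, Matrix (Fin (m i)) (Fin (n i)) K) = 0 := by
  simp [srk]

/-- The Singleton argument: a large code has a nonzero codeword whose `i`-th block vanishes on
`r i` columns. -/
theorem exists_mem_ne_zero_srk_add_sum_le {r : Fin t → ℕ} (hr : ∀ i, r i ≤ n i)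
    (hdim : ∑ i, m i * r i < finrank K 𝒞) :
    ∃ C ∈ 𝒞, C ≠ 0 ∧ srk C + ∑ i, r i ≤ ∑ i, n i := by
  have hcols : ∀ i, ∃ S : Finset (Fin (n i)), #S = r i := fun i =>
    (exists_subset_card_eq (s := univ) (by simpa using hr i)).imp fun _ => And.right
  choose S hS using hcols
  let restrict : 𝒞 →ₗ[K] (∀ i, S i → Fin (m i) → K) :=
    { toFun := fun C i c => (C.1 i).col c
      map_add' := fun _ _ => rfl
      map_smul' := fun _ _ => rfl }
  have hker : LinearMap.ker restrict ≠ ⊥ := by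
    apply LinearMap.ker_ne_bot_of_finrank_lt
    simpa [finrank_pi_fintype, hS, mul_comm] using hdim
  obtain ⟨⟨C, hC⟩, hrestrict, hC0⟩ := Submodule.exists_mem_ne_zero_of_ne_bot hker
  refine ⟨C, hC, fun h => hC0 (Subtype.ext h), ?_⟩
  rw [srk, ← sum_add_distrib]
  refine sum_le_sum fun i _ => ?_
  simpa [hS] using rank_add_card_le_of_col_eq_zero (C i) (S i) fun c hc =>
    congrFun (congrFun (LinearMap.mem_ker.1 hrestrict) i) ⟨c, hc⟩

theorem minDist_eq_of_forall_le_srk {j : Fin t} {δ : ℕ} (hmj : 0 < m j) (hδ : δ + 1 ≤ n j)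
    (hdim : finrank K 𝒞 + δ * m j = ∑ i ∈ Ici j, m i * n i)
    (hdist : ∀ C ∈ 𝒞, C ≠ 0 → ∑ i ∈ Iio j, n i + δ + 1 ≤ srk C) :
    minDist 𝒞 = ∑ i ∈ Iio j, n i + δ + 1 := by
  let r : Fin t → ℕ := fun i => if i = j then n i - (δ + 1) else if j < i then n i else 0
  have hr : ∀ i, r i ≤ n i := fun i => by
    simp only [r]
    split_ifs <;> lia
  have hsum : ∀ w : Fin t → ℕ, ∑ i, w i * r i + w j * (δ + 1) = ∑ i ∈ Ici j, w i * n i := by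
    intro w
    have hr_add : ∀ i, r i + (if i = j then δ + 1 else 0) = if j ≤ i then n i else 0 := fun i => by
      simp only [r]
      split_ifs <;> grind
    calc ∑ i, w i * r i + w j * (δ + 1)
        = ∑ i, w i * (r i + if i = j then δ + 1 else 0) := by
          simp only [mul_add, sum_add_distrib, mul_ite, mul_zero, sum_ite_eq', mem_univ, if_true]
      _ = ∑ i ∈ Ici j, w i * n i := by
          simp only [hr_add, mul_ite, mul_zero, ← sum_filter, filter_le_eq_Ici]
  have hdim_r := hsum m
  have hsum_r := hsum 1
  simp only [Pi.one_apply, one_mul] at hsum_r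
  have hsplit := sum_Iio_add_sum_Ici n j
  obtain ⟨C, hC, hC0, hle⟩ := exists_mem_ne_zero_srk_add_sum_le (𝒞 := 𝒞) hr (by lia)
  refine IsLeast.csInf_eq ⟨⟨C, hC, hC0, le_antisymm (by lia) (hdist C hC hC0)⟩, ?_⟩
  rintro _ ⟨C', hC', hC'0, rfl⟩
  exact hdist C' hC' hC'0

theorem isMSRD_and_minDist_eq_of_forall_lt_srk {j : Fin t} (hj : ∀ i, j ≤ i → m i = m j)
    (hmj : 0 < m j) {d : ℕ} (hjd : ∑ i ∈ Iio j, n i ≤ d) (hd : d < ∑ i, n i)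
    (hdim : finrank K 𝒞 = m j * (∑ i, n i - d)) (hdist : ∀ C ∈ 𝒞, C ≠ 0 → d < srk C) :
    IsMSRD 𝒞 ∧ minDist 𝒞 = d + 1 := by
  obtain ⟨j', δ, hδ, rfl⟩ := exists_eq_sum_Iio_add hd
  have hjj' : j ≤ j' := by
    by_contra! hlt
    have hsub : Iic j' ⊆ Iio j := fun i hi => mem_Iio.2 ((mem_Iic.1 hi).trans_lt hlt)
    have hle := sum_le_sum_of_subset (f := n) hsub
    rw [← Iio_insert, sum_insert notMem_Iio_self] at hle
    lia
  have hm_eq : ∀ i ∈ Ici j', m i = m j := fun i hi => hj i (hjj'.trans (mem_Ici.1 hi))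
  have hdim' : finrank K 𝒞 + δ * m j' = ∑ i ∈ Ici j', m i * n i := by
    have hsplit := sum_Iio_add_sum_Ici n j'
    rw [sum_congr rfl fun i hi => by rw [hm_eq i hi], ← mul_sum, hdim, hj j' hjj', mul_comm δ,
      ← mul_add]
    congr 1
    lia
  have hminDist := minDist_eq_of_forall_le_srk (hj j' hjj' ▸ hmj) hδ hdim' hdist
  exact ⟨⟨j', δ, hδ, hminDist, hdim'⟩, hminDist⟩

end Singleton

theorem exists_linearMap_sum_le_srk_add_natDegree {L : Type*} [Field L] [Algebra F L]
    [FiniteDimensional F L] (hnm : ∀ i, n i ≤ m i) (hLm : ∀ i, finrank F L ≤ m i)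
    {S : Finset (Fin t)} (hS : #S < Fintype.card F) (hnS : ∀ i ∈ S, n i ≤ finrank F L) {N : ℕ}
    (hN : ∀ i ∉ S, finrank F L * N ≤ m i) :
    ∃ enc : L[X] →ₗ[F] (∀ i, Matrix (Fin (m i)) (Fin (n i)) F),
      ∀ f ∈ degreeLT L N, f ≠ 0 → ∑ i, n i ≤ srk (enc f) + f.natDegree := by
  have : Finite L := Module.finite_of_finite F
  obtain ⟨a, ha, hnorm⟩ := exists_ne_zero_and_injOn_norm L hS
  set σ := FiniteField.frobeniusAlgEquivOfAlgebraic F L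
  have hblock : ∀ i, ∃ φ : L[X] →ₗ[F] Matrix (Fin (m i)) (Fin (n i)) F,
      ∀ f ∈ degreeLT L N, f ≠ 0 → n i ≤ (φ f).rank +
        if i ∈ S then finrank F (LinearMap.ker (skewEval (twist σ (a i)) f)) else 0 := by
    intro i
    by_cases hi : i ∈ S
    · obtain ⟨φ, hφ⟩ := exists_linearMap_matrix_le_rank_add_finrank_ker (hnS i hi) (hLm i)
      refine ⟨φ ∘ₗ (skewEval (twist σ (a i))).restrictScalars F, fun f _ _ => ?_⟩
      simpa [hi] using hφ (skewEval (twist σ (a i)) f)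
    · have : FiniteDimensional F ((degreeLT L N).restrictScalars F) :=
        Module.Finite.trans (R := F) L (degreeLT L N)
      obtain ⟨φ, hφ⟩ := exists_linearMap_matrix_le_rank (finrank_pos.trans_le (hLm i)) (hnm i)
        ((degreeLT L N).restrictScalars F)
        ((finrank_restrictScalars_degreeLT L N).trans_le (hN i hi))
      exact ⟨φ, fun f hf hf0 => by simpa [hi] using hφ f hf hf0⟩
  choose φ hφ using hblock
  refine ⟨LinearMap.pi φ, fun f hf hf0 => ?_⟩
  calc ∑ i, n i
      ≤ ∑ i, ((φ i f).rank +
          if i ∈ S then finrank F (LinearMap.ker (skewEval (twist σ (a i)) f)) else 0) :=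
        sum_le_sum fun i _ => hφ i f hf hf0
    _ = srk (LinearMap.pi φ f) +
          ∑ i ∈ S, finrank F (LinearMap.ker (skewEval (twist σ (a i)) f)) := by
        rw [sum_add_distrib, sum_ite_mem, univ_inter]
        rfl
    _ ≤ srk (LinearMap.pi φ f) + f.natDegree :=
        Nat.add_le_add_left (sum_finrank_ker_skewEval_twist_le_natDegree
          (fun _ => mem_range_algebraMap_of_frobenius_eq) (fun i _ => ha i) hnorm hf0) _

end SumRankMetric

theorem exists_MSRD_chain_II_general {j : Fin t} (hm : ∀ i, m j ≤ m i)
    (hj : ∀ i, j ≤ i → m i = m j) (hmj : 0 < m j) (hnm : ∀ i, n i ≤ m i) (δ : ℕ)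
    {S : Finset (Fin t)} (hS : #S < Fintype.card F) (hnS : ∀ i ∈ S, n i ≤ m j)
    (hmS : ∀ i ∉ S, m j * (∑ i ∈ Ici j, n i - δ) ≤ m i) :
    ∃ 𝒞 : ℕ → Submodule F (∀ i : Fin t, Matrix (Fin (m i)) (Fin (n i)) F),
      (∀ i, ∑ l ∈ Iio j, n l + δ + 1 ≤ i → i < ∑ l, n l → 𝒞 (i + 1) ≤ 𝒞 i) ∧
      (∀ i, ∑ l ∈ Iio j, n l + δ + 1 ≤ i → i ≤ ∑ l, n l →
        IsMSRD (𝒞 i) ∧ minDist (𝒞 i) = i) := by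
  obtain ⟨L, _, _, _, hL⟩ := exists_field_finrank_eq F hmj
  simp only [← hL] at hm hnS hmS
  obtain ⟨enc, henc⟩ := exists_linearMap_sum_le_srk_add_natDegree hnm hm hS hnS hmS
  refine ⟨fun i => ((degreeLT L (∑ l, n l + 1 - i)).restrictScalars F).map enc, fun i _ _ =>
    Submodule.map_mono (degreeLT_mono (by lia)), fun i hi hin => ?_⟩
  have hsplit := sum_Iio_add_sum_Ici n j
  obtain ⟨d, rfl⟩ : ∃ d, i = d + 1 := ⟨i - 1, by lia⟩
  simp only [Nat.add_sub_add_right]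
  have hdist : ∀ f ∈ degreeLT L (∑ l, n l - d), f ≠ 0 → d < srk (enc f) := fun f hf hf0 => by
    have hle := henc f (degreeLT_mono (by lia) hf) hf0
    have hdeg := (natDegree_lt_iff_degree_lt hf0).2 (mem_degreeLT.1 hf)
    lia
  have hinj : Disjoint ((degreeLT L (∑ l, n l - d)).restrictScalars F) (LinearMap.ker enc) := by
    refine LinearMap.disjoint_ker.2 fun f hf hf_ker => by_contra fun hf0 => ?_
    exact Nat.not_lt_zero d (srk_zero (K := F) ▸ hf_ker ▸ hdist f hf hf0)
  refine isMSRD_and_minDist_eq_of_forall_lt_srk hj hmj (by lia) (by lia) ?_ ?_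
  · rw [finrank_map_eq_of_disjoint_ker hinj, finrank_restrictScalars_degreeLT, hL]
  · rintro _ ⟨f, hf, rfl⟩ hne
    exact hdist f hf fun h => hne (by rw [h, map_zero])

/-- Let `j = min {i ∈ [t] : m i = m t}` and `d = n_1 + ⋯ + n_{j-1} + δ + 1` with
`0 ≤ δ ≤ n j - 1`. Let `h = max {i ∈ [t] : n i > m t}`, assumed to exist, and assume
`m h ≥ m t * (n_j + ⋯ + n_t - δ)`. If `q > t - h`, then there is a chain of MSRD codes
`𝒞_n ⊆ ⋯ ⊆ 𝒞_{d+1} ⊆ 𝒞_d ⊆ 𝕄` with `d(𝒞_i) = i` for all `d ≤ i ≤ n`. -/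
theorem exists_MSRD_chain_II (ht : 0 < t)
    (hm_mono : ∀ i j : Fin t, i ≤ j → m j ≤ m i)
    (hn_pos : ∀ i, 0 < n i) (hmn : ∀ i, n i ≤ m i)
    (j : Fin t) (hj_eq : m j = m ⟨t - 1, Nat.sub_lt ht Nat.one_pos⟩)
    (hj_min : ∀ i : Fin t, m i = m ⟨t - 1, Nat.sub_lt ht Nat.one_pos⟩ → j ≤ i)
    (δ : ℕ) (hδ : δ + 1 ≤ n j)
    (h : Fin t) (hh_gt : m ⟨t - 1, Nat.sub_lt ht Nat.one_pos⟩ < n h)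
    (hh_max : ∀ i : Fin t, m ⟨t - 1, Nat.sub_lt ht Nat.one_pos⟩ < n i → i ≤ h)
    (hmh : m ⟨t - 1, Nat.sub_lt ht Nat.one_pos⟩ * (∑ i ∈ Finset.Ici j, n i - δ) ≤ m h)
    (hq : t - (h.1 + 1) < Fintype.card F) :
    ∃ 𝒞 : ℕ → Submodule F (∀ i : Fin t, Matrix (Fin (m i)) (Fin (n i)) F),
      (∀ i, ∑ l ∈ Finset.Iio j, n l + δ + 1 ≤ i → i < ∑ l, n l → 𝒞 (i + 1) ≤ 𝒞 i) ∧
      (∀ i, ∑ l ∈ Finset.Iio j, n l + δ + 1 ≤ i → i ≤ ∑ l, n l →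
        IsMSRD (𝒞 i) ∧ minDist (𝒞 i) = i) := by
  have hlast : ∀ i, m j ≤ m i := fun i =>
    hj_eq ▸ hm_mono _ _ (Fin.le_def.2 (Nat.le_sub_one_of_lt i.2))
  rw [← hj_eq] at hh_max hmh
  refine exists_MSRD_chain_II_general hlast (fun i hji => (hm_mono j i hji).antisymm (hlast i))
    ((hn_pos j).trans_le (hmn j)) hmn δ (S := Finset.Ioi h) ?_ (fun i hi => ?_) fun i hi => ?_
  · rwa [Fin.card_Ioi, Nat.sub_sub, add_comm 1]
  · exact not_lt.1 fun hlt => (Finset.mem_Ioi.1 hi).not_ge (hh_max i hlt)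
  · exact hmh.trans (hm_mono i h (not_lt.1 fun hlt => hi (Finset.mem_Ioi.2 hlt)))
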